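/- arXiv:2401.01061 — 2 statements merged into one kernel-verified Lean document; each statement's English description precedes it below -/
import Mathlib

section
/- Let X be a complex Banach space and T ∈ L(X). The following are equivalent: (i) there exists P ∈ L(X) with P² − P compact and PT − TP compact, and there exists U ∈ L(X) with UP − PU compact and (T + P)U − I compact (i.e. the image of T in the Calkin algebra is right p-invertible for the idempotent p = Π(P)); (ii) there exists S ∈ L(X) such that STS − S, TS² − S and TST − T²S are all compact, and there exists V ∈ L(X) such that the commutator VTS − TSV and (I + T − TS)V − I are compact. Moreover, when (ii) holds, the operator P in (i) may be chosen so that P − (I − TS) is compact. -/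
/-!
Modulo the compact operators every condition becomes an identity in a quotient ring. There, if `p`
is an idempotent commuting with `t` and `u`, and `(t + p) * u = 1`, multiplying by `q = 1 - p`
kills `p` and leaves `t * (q * u) = q`. Hence `s = q * u` is a right inverse of `t` in the corner
ring of `q`, and `p` is recovered as `1 - t * s`. Conversely, `s * t * s = s` makes `t * s`
idempotent, so `1 - t * s` can serve as `p`, with `u = v`.
-/

/-- `u` is a right `p`-inverse of `t`: it commutes with `p`, an idempotent that commutes with `t`,
and is a right inverse of `t + p`. -/
structure IsRightPInverse {R : Type*} [Ring R] (p t u : R) : Prop where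
  isIdempotentElem : IsIdempotentElem p
  commute_left : Commute p t
  commute_right : Commute u p
  add_mul_eq_one : (t + p) * u = 1

/-- The component of `u` in the corner `(1 - p) R (1 - p)` for an idempotent `p` commuting with `u`.
For a right `p`-inverse `u` of `t`, it is the element `s` with `t * s = 1 - p`. -/
def cornerInverse {R : Type*} [Ring R] (p u : R) : R :=
  (1 - p) * u

theorem map_cornerInverse {R Q : Type*} [Ring R] [Ring Q] (f : R →+* Q) (p u : R) :
    f (cornerInverse p u) = cornerInverse (f p) (f u) := by
  simp only [cornerInverse, map_mul, map_sub, map_one]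

section Ring

variable {R : Type*} [Ring R] {p t u s v : R}

theorem one_sub_mul_cornerInverse (hp : IsIdempotentElem p) (u : R) :
    (1 - p) * cornerInverse p u = cornerInverse p u := by
  rw [cornerInverse, ← mul_assoc, hp.one_sub.eq]

theorem cornerInverse_mul_one_sub (hp : IsIdempotentElem p) (hup : Commute u p) :
    cornerInverse p u * (1 - p) = cornerInverse p u := by
  have hu : Commute u (1 - p) := (Commute.one_right u).sub_right hup
  rw [cornerInverse, mul_assoc, hu.eq, ← mul_assoc, hp.one_sub.eq]

namespace IsRightPInverse

theorem mul_cornerInverse (h : IsRightPInverse p t u) : t * cornerInverse p u = 1 - p := by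
  have h_corner : (1 - p) * (t + p) = t * (1 - p) := by
    rw [mul_add, h.isIdempotentElem.one_sub_mul_self, add_zero, sub_mul, mul_sub, one_mul, mul_one,
      h.commute_left.eq]
  calc t * cornerInverse p u = (1 - p) * ((t + p) * u) := by
        rw [cornerInverse, ← mul_assoc, ← h_corner, mul_assoc]
    _ = 1 - p := by rw [h.add_mul_eq_one, mul_one]

theorem cornerInverse_mul_mul_cornerInverse (h : IsRightPInverse p t u) :
    cornerInverse p u * t * cornerInverse p u = cornerInverse p u := by
  rw [mul_assoc, h.mul_cornerInverse,
    cornerInverse_mul_one_sub h.isIdempotentElem h.commute_right]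

theorem mul_cornerInverse_mul_cornerInverse (h : IsRightPInverse p t u) :
    t * cornerInverse p u * cornerInverse p u = cornerInverse p u := by
  rw [h.mul_cornerInverse, one_sub_mul_cornerInverse h.isIdempotentElem]

theorem mul_cornerInverse_mul (h : IsRightPInverse p t u) :
    t * cornerInverse p u * t = t * t * cornerInverse p u := by
  rw [mul_assoc t t, h.mul_cornerInverse, sub_mul, mul_sub, one_mul, mul_one, h.commute_left.eq]

theorem commute_mul_cornerInverse (h : IsRightPInverse p t u) :
    Commute u (t * cornerInverse p u) := by
  rw [h.mul_cornerInverse]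
  exact (Commute.one_right u).sub_right h.commute_right

theorem one_add_sub_mul_cornerInverse_mul (h : IsRightPInverse p t u) :
    (1 + t - t * cornerInverse p u) * u = 1 := by
  rw [h.mul_cornerInverse, ← h.add_mul_eq_one]
  congr 1
  abel

end IsRightPInverse

theorem isRightPInverse_one_sub_mul (hsts : s * t * s = s) (htst : t * s * t = t * t * s)
    (hv : Commute v (t * s)) (hinv : (1 + t - t * s) * v = 1) :
    IsRightPInverse (1 - t * s) t v where
  isIdempotentElem := by
    refine IsIdempotentElem.one_sub ?_
    rw [IsIdempotentElem, mul_assoc, ← mul_assoc s, hsts]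
  commute_left := by
    have hts : Commute (t * s) t := htst.trans (mul_assoc t t s)
    exact (Commute.one_left t).sub_left hts
  commute_right := (Commute.one_right v).sub_right hv
  add_mul_eq_one := by rwa [← add_sub_assoc, add_comm t 1]

theorem sub_mem_iff_mk'_eq (I : TwoSidedIdeal R) {x y : R} :
    x - y ∈ I ↔ I.ringCon.mk' x = I.ringCon.mk' y :=
  (I.rel_iff x y).symm.trans I.ringCon.eq.symm

theorem right_semi_P_Fredholm_characterization_general (I : TwoSidedIdeal R) (t : R) :
    ((∃ p, p * p - p ∈ I ∧ p * t - t * p ∈ I ∧ ∃ u, u * p - p * u ∈ I ∧ (t + p) * u - 1 ∈ I) ↔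
      ∃ s, s * t * s - s ∈ I ∧ t * s * s - s ∈ I ∧ t * s * t - t * t * s ∈ I ∧
        ∃ v, v * (t * s) - (t * s) * v ∈ I ∧ (1 + t - t * s) * v - 1 ∈ I) ∧
    ∀ s, s * t * s - s ∈ I → t * s * t - t * t * s ∈ I →
      (∃ v, v * (t * s) - (t * s) * v ∈ I ∧ (1 + t - t * s) * v - 1 ∈ I) →
      ∃ p, p - (1 - t * s) ∈ I ∧ p * p - p ∈ I ∧ p * t - t * p ∈ I ∧
        ∃ u, u * p - p * u ∈ I ∧ (t + p) * u - 1 ∈ I := by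
  simp only [sub_mem_iff_mk'_eq, map_mul, map_add, map_sub, map_one]
  set π := I.ringCon.mk'
  have exists_p : ∀ s, π s * π t * π s = π s → π t * π s * π t = π t * π t * π s →
      (∃ v, π v * (π t * π s) = π t * π s * π v ∧ (1 + π t - π t * π s) * π v = 1) →
      ∃ p, π p = 1 - π t * π s ∧ π p * π p = π p ∧ π p * π t = π t * π p ∧
        ∃ u, π u * π p = π p * π u ∧ (π t + π p) * π u = 1 := by
    rintro s hsts htst ⟨v, hv, hinv⟩
    have hp : π (1 - t * s) = 1 - π t * π s := by simp only [map_sub, map_one, map_mul]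
    obtain ⟨hidem, hpt, hvp, hadd⟩ := hp ▸ isRightPInverse_one_sub_mul hsts htst hv hinv
    exact ⟨1 - t * s, hp, hidem, hpt, v, hvp, hadd⟩
  refine ⟨⟨?_, ?_⟩, exists_p⟩
  · rintro ⟨p, hidem, hpt, u, hup, hadd⟩
    have h : IsRightPInverse (π p) (π t) (π u) := ⟨hidem, hpt, hup, hadd⟩
    refine ⟨cornerInverse p u, ?_⟩
    rw [map_cornerInverse]
    exact ⟨h.cornerInverse_mul_mul_cornerInverse, h.mul_cornerInverse_mul_cornerInverse,
      h.mul_cornerInverse_mul, u, h.commute_mul_cornerInverse, h.one_add_sub_mul_cornerInverse_mul⟩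
  · rintro ⟨s, hsts, -, htst, hv⟩
    obtain ⟨p, -, hp⟩ := exists_p s hsts htst hv
    exact ⟨p, hp⟩

end Ring

/-- The two-sided ideal of compact operators in the ring of continuous endomorphisms of a
topological module; for a Banach space, the quotient by it is the Calkin algebra. -/
def compactOperatorIdeal (R M : Type*) [Ring R] [TopologicalSpace M] [AddCommGroup M]
    [IsTopologicalAddGroup M] [Module R M] : TwoSidedIdeal (M →L[R] M) :=
  .mk' {A | IsCompactOperator A} isCompactOperator_zero .add .neg
    (fun {A _} hB => hB.clm_comp A) (fun {_ B} hA => hA.comp_clm B)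

theorem mem_compactOperatorIdeal {R M : Type*} [Ring R] [TopologicalSpace M]
    [AddCommGroup M] [IsTopologicalAddGroup M] [Module R M] {A : M →L[R] M} :
    A ∈ compactOperatorIdeal R M ↔ IsCompactOperator A :=
  TwoSidedIdeal.mem_mk' ..

/-- **Right semi-P-Fredholm operators.**
`T ∈ L(X)` is right semi-`P`-Fredholm for some idempotent `p = Π(P)` of the Calkin algebra
(i.e. `Π(T)` is right `p`-invertible) if and only if there exists `S ∈ L(X)` such that
`STS − S`, `TS² − S`, `TST − T²S` are compact and there exists `V ∈ L(X)` with
`[V, TS]` and `(I + T − TS)V − I` compact.  Moreover, in that case `P` can be chosen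
with `P − (I − TS)` compact. -/
theorem right_semi_P_Fredholm_characterization
    {X : Type*} [NormedAddCommGroup X] [NormedSpace ℂ X] [CompleteSpace X]
    (T : X →L[ℂ] X) :
    ((∃ P : X →L[ℂ] X, IsCompactOperator ⇑(P * P - P) ∧ IsCompactOperator ⇑(P * T - T * P) ∧
        ∃ U : X →L[ℂ] X, IsCompactOperator ⇑(U * P - P * U) ∧
          IsCompactOperator ⇑((T + P) * U - 1)) ↔
      (∃ S : X →L[ℂ] X, IsCompactOperator ⇑(S * T * S - S) ∧
        IsCompactOperator ⇑(T * S * S - S) ∧ IsCompactOperator ⇑(T * S * T - T * T * S) ∧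
        ∃ V : X →L[ℂ] X, IsCompactOperator ⇑(V * (T * S) - (T * S) * V) ∧
          IsCompactOperator ⇑((1 + T - T * S) * V - 1))) ∧
    (∀ S : X →L[ℂ] X, IsCompactOperator ⇑(S * T * S - S) →
      IsCompactOperator ⇑(T * S * S - S) → IsCompactOperator ⇑(T * S * T - T * T * S) →
      (∃ V : X →L[ℂ] X, IsCompactOperator ⇑(V * (T * S) - (T * S) * V) ∧
        IsCompactOperator ⇑((1 + T - T * S) * V - 1)) →
      ∃ P : X →L[ℂ] X, IsCompactOperator ⇑(P - (1 - T * S)) ∧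
        IsCompactOperator ⇑(P * P - P) ∧ IsCompactOperator ⇑(P * T - T * P) ∧
        ∃ U : X →L[ℂ] X, IsCompactOperator ⇑(U * P - P * U) ∧
          IsCompactOperator ⇑((T + P) * U - 1)) := by
  simp only [← mem_compactOperatorIdeal]
  exact (right_semi_P_Fredholm_characterization_general (compactOperatorIdeal ℂ X) T).imp_right
    fun h S hSTS _ => h S hSTS
end

section
/- Let A be a complex unital Banach algebra with unit e, let a ∈ A, and let p, p₀ ∈ A be idempotents such that ap = pa, ap₀ = p₀a, pp₀ = p₀p, (ap₀)ⁿ = 0 for some integer n ≥ 1, ap is quasinilpotent, and there exists b ∈ A with bp₀ = p₀b and b(a + p₀) = e. Then p(e − p₀) = 0 and aⁿp = 0. In particular ap is nilpotent. -/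
/-!
Put `y = (1 - p₀) * p` and `x = a * p`. Left invertibility of `a + p₀` makes `y` a fixed point of
`z ↦ b * z * x`, so `y = b ^ k * y * x ^ k` for every `k`. If `y ≠ 0`, this forces
`1 ≤ ‖b ^ k‖ * ‖x ^ k‖`, and taking `k`-th roots, Gelfand's formula gives `1 ≤ ρ(b) * ρ(x)`, which
is impossible when `x` is quasinilpotent. Hence `p = p₀ * p`, so that
`a ^ n * p = a ^ n * p₀ ^ n * p = (a * p₀) ^ n * p = 0`.
-/

theorem pow_mul_mul_pow_eq_self {M : Type*} [Monoid M] {b x y : M} (h : b * y * x = y) (k : ℕ) :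
    b ^ k * y * x ^ k = y := by
  induction k with
  | zero => simp
  | succ k ih =>
    calc b ^ (k + 1) * y * x ^ (k + 1) = b ^ k * (b * y * x) * x ^ k := by
          simp only [pow_succ b, pow_succ' x, mul_assoc]
      _ = y := by rw [h, ih]

theorem pow_mul_eq_zero_of_mul_pow_eq_zero {M : Type*} [MonoidWithZero M] {a p q : M} {n : ℕ}
    (haq : Commute a q) (hqp : q * p = p) (hnil : (a * q) ^ n = 0) : a ^ n * p = 0 := by
  have hqnp : q ^ n * p = p := by
    simpa using pow_mul_mul_pow_eq_self (b := q) (x := 1) (y := p) (by simpa) n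
  calc a ^ n * p = (a * q) ^ n * p := by rw [haq.mul_pow, mul_assoc, hqnp]
    _ = 0 := by rw [hnil, zero_mul]

theorem mul_one_sub_mul_mul_mul_eq_self {R : Type*} [Ring R] {a b p q : R}
    (hp : IsIdempotentElem p) (hq : IsIdempotentElem q) (hap : Commute a p) (haq : Commute a q)
    (hb : b * (a + q) = 1) : b * ((1 - q) * p) * (a * p) = (1 - q) * p := by
  have ha1q : Commute a (1 - q) := (Commute.one_right a).sub_right haq
  calc b * ((1 - q) * p) * (a * p) = b * ((1 - q) * a) * (p * p) := by
        simp only [mul_assoc, hap.left_comm]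
    _ = b * ((a + q) * (1 - q)) * p := by
        rw [hp.eq, ← ha1q.eq, add_mul, hq.mul_one_sub_self, add_zero]
    _ = (1 - q) * p := by rw [← mul_assoc b, hb, one_mul]

theorem one_le_nnnorm_mul_nnnorm_of_mul_mul_eq_self {R : Type*} [NonUnitalNormedRing R]
    {b x y : R} (h : b * y * x = y) (hy : y ≠ 0) : 1 ≤ ‖b‖₊ * ‖x‖₊ := by
  refine le_of_mul_le_mul_right ?_ (nnnorm_pos.2 hy)
  calc 1 * ‖y‖₊ = ‖b * y * x‖₊ := by rw [h, one_mul]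
    _ ≤ ‖b‖₊ * ‖y‖₊ * ‖x‖₊ := nnnorm_mul₃_le
    _ = ‖b‖₊ * ‖x‖₊ * ‖y‖₊ := mul_right_comm ..

theorem spectralRadius_ne_top (𝕜 : Type*) {A : Type*} [NormedField 𝕜] [NormedRing A]
    [NormedAlgebra 𝕜 A] [CompleteSpace A] (a : A) : spectralRadius 𝕜 a ≠ ⊤ :=
  ne_top_of_le_ne_top (by simp [ENNReal.mul_eq_top])
    (spectrum.spectralRadius_le_pow_nnnorm_pow_one_div 𝕜 a 0)

section ComplexBanachAlgebra

variable {A : Type*} [NormedRing A] [NormedAlgebra ℂ A] [CompleteSpace A]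

theorem one_le_spectralRadius_mul_spectralRadius_of_mul_mul_eq_self {b x y : A}
    (h : b * y * x = y) (hy : y ≠ 0) : 1 ≤ spectralRadius ℂ b * spectralRadius ℂ x := by
  have gelfand := ENNReal.Tendsto.mul
    (spectrum.pow_nnnorm_pow_one_div_tendsto_nhds_spectralRadius b)
    (.inr (spectralRadius_ne_top ℂ x))
    (spectrum.pow_nnnorm_pow_one_div_tendsto_nhds_spectralRadius x)
    (.inr (spectralRadius_ne_top ℂ b))
  refine ge_of_tendsto' gelfand fun k ↦ ?_
  have one_le_norms : 1 ≤ ‖b ^ k‖₊ * ‖x ^ k‖₊ :=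
    one_le_nnnorm_mul_nnnorm_of_mul_mul_eq_self (pow_mul_mul_pow_eq_self h k) hy
  have exponent_nonneg : 0 ≤ 1 / (k : ℝ) := by positivity
  rw [← ENNReal.mul_rpow_of_nonneg _ _ exponent_nonneg]
  calc (1 : ENNReal) = 1 ^ (1 / (k : ℝ)) := (ENNReal.one_rpow _).symm
    _ ≤ (‖b ^ k‖₊ * ‖x ^ k‖₊) ^ (1 / (k : ℝ)) :=
        ENNReal.rpow_le_rpow (by exact_mod_cast one_le_norms) exponent_nonneg

theorem idempotent_annihilation_of_left_Drazin_general {a b p p₀ : A}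
    (hp : IsIdempotentElem p) (hp₀ : IsIdempotentElem p₀) (hap : Commute a p)
    (hap₀ : Commute a p₀) {n : ℕ} (hnil : (a * p₀) ^ n = 0)
    (hρ : spectralRadius ℂ b * spectralRadius ℂ (a * p) < 1) (hb : b * (a + p₀) = 1) :
    (1 - p₀) * p = 0 ∧ a ^ n * p = 0 := by
  have hfixed : b * ((1 - p₀) * p) * (a * p) = (1 - p₀) * p :=
    mul_one_sub_mul_mul_mul_eq_self hp hp₀ hap hap₀ hb
  have hzero : (1 - p₀) * p = 0 := by
    by_contra hne
    exact hρ.not_ge <|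
      one_le_spectralRadius_mul_spectralRadius_of_mul_mul_eq_self hfixed hne
  have hp₀p : p₀ * p = p := by rwa [sub_mul, one_mul, sub_eq_zero, eq_comm] at hzero
  exact ⟨hzero, pow_mul_eq_zero_of_mul_pow_eq_zero hap₀ hp₀p hnil⟩

end ComplexBanachAlgebra

/-- Key lemma in the proof that Drazin invertibility is equivalent to left and right
Drazin invertibility: if `p, p₀` are commuting idempotents commuting with `a`, with
`(ap₀)ⁿ = 0`, `ap` quasinilpotent, and `a + p₀` left invertible in the commutant of `p₀`,
then `p(e − p₀) = 0` and `aⁿp = 0`; in particular `ap` is nilpotent. -/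
theorem idempotent_annihilation_of_left_Drazin
    {A : Type*} [NormedRing A] [NormedAlgebra ℂ A] [CompleteSpace A]
    (a p p₀ : A) (hp : p * p = p) (hp₀ : p₀ * p₀ = p₀)
    (hap : a * p = p * a) (hap₀ : a * p₀ = p₀ * a) (hpp₀ : p * p₀ = p₀ * p)
    (n : ℕ) (hn : 1 ≤ n) (hnil : (a * p₀) ^ n = 0)
    (hq : spectralRadius ℂ (a * p) = 0)
    (b : A) (hbp₀ : b * p₀ = p₀ * b) (hb : b * (a + p₀) = 1) :
    p * (1 - p₀) = 0 ∧ a ^ n * p = 0 := by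
  rw [mul_one_sub, hpp₀, ← one_sub_mul]
  exact idempotent_annihilation_of_left_Drazin_general hp hp₀ hap hap₀ hnil (by simp [hq]) hb
end
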